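/- For n ≥ 2 and 1 ≤ k ≤ n-1, the sum over all hypertrees T with k hyperedges on n labelled vertices of the product Π_{e hyperedge of T} (|e|-2)! equals n^{k-1} |S_1(n-1,k)|, where S_1(n-1,k) is the Stirling number of the first kind; i.e. Σ_{T ∈ HT_k(n)} Π_{e∈E(T)} (|e|-2)! = (-1)^{n+k+1} n^{k-1} S_1(n-1,k). -/

import Mathlib

/-- A hyperforest on the vertex set `V`: a hypergraph whose hyperedges (of size at
least `2`) pairwise intersect in at most one vertex, and in which every cycle
(a cyclic sequence of at least three distinct consecutively adjacent vertices)
is contained in a single hyperedge. -/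
structure Hyperforest (V : Type*) [DecidableEq V] where
  edges : Finset (Finset V)
  two_le : ∀ e ∈ edges, 2 ≤ e.card
  inter : ∀ e ∈ edges, ∀ f ∈ edges, e ≠ f → (e ∩ f).card ≤ 1
  cycles : ∀ (k : ℕ) (v : Fin (k + 3) → V), Function.Injective v →
    (∀ j : Fin (k + 3), ∃ e ∈ edges, v j ∈ e ∧ v (j + 1) ∈ e) →
    ∃ e ∈ edges, ∀ j, v j ∈ e

/-- The order on hyperforests: `F' ≤ F` iff every hyperedge of `F'` is contained
in some hyperedge of `F`. -/
def HFle {V : Type*} [DecidableEq V] (F' F : Hyperforest V) : Prop :=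
  ∀ e' ∈ F'.edges, ∃ e ∈ F.edges, e' ⊆ e

/-- A hyperforest is connected (i.e. is a hypertree) if any two vertices are
joined by a path of consecutively adjacent vertices. -/
def HFConnected {V : Type*} [DecidableEq V] (F : Hyperforest V) : Prop :=
  ∀ u v : V, Relation.ReflTransGen (fun a b => a ≠ b ∧ ∃ e ∈ F.edges, a ∈ e ∧ b ∈ e) u v

/-- The signed Stirling numbers of the first kind, defined by
`∑_k S1 n k • x^k = x (x-1) ⋯ (x-n+1)`. -/
noncomputable def S1 (n k : ℕ) : ℤ :=
  (∏ j ∈ Finset.range n, (Polynomial.X - Polynomial.C (j : ℤ))).coeff k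



/-! ### Counting acyclic parent functions -/

inductive HReach {V ι : Type*} (b : V → Option ι) (p : ι → V) : V → Prop
  | base (v : V) : b v = none → HReach b p v
  | step (v : V) (i : ι) : b v = some i → HReach b p (p i) → HReach b p v

def HAcyc {V ι : Type*} (b : V → Option ι) (p : ι → V) : Prop := ∀ i, HReach b p (p i)

lemma HReach.congr {V ι : Type*} {b : V → Option ι} {p : ι → V} {v w : V}
    (h : b v = b w) (hv : HReach b p v) : HReach b p w := by
  cases hv with
  | base _ h1 => exact .base _ (h ▸ h1)
  | step _ i h1 h2 => exact .step _ i (h ▸ h1) h2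

open Classical in
noncomputable def hmerge {V κ : Type*} (b : V → Option (Option κ)) (v0 : V) : V → Option κ :=
  fun v => if b v = some none then (b v0).join else (b v).join

lemma hreach_not {V κ : Type*} (b : V → Option (Option κ)) (p : Option κ → V)
    (h0 : b (p none) = some none) (v : V) (hv : HReach b p v) : b v ≠ some none := by
  induction hv with
  | base v h => simp [h]
  | step v i h1 h2 ih =>
    rintro h3
    rw [h1] at h3
    simp at h3
    subst h3
    exact ih h0

lemma hreach_merge {V κ : Type*} (b : V → Option (Option κ)) (p : Option κ → V)
    (h0 : b (p none) ≠ some none) (v : V) :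
    HReach b p v ↔ HReach (hmerge b (p none)) (fun j => p (some j)) v := by
  constructor
  · intro h
    induction h with
    | base v h => exact .base _ (by simp [hmerge, h])
    | step v i h1 h2 ih =>
      cases i with
      | none =>
        refine HReach.congr ?_ ih
        simp [hmerge, h1]
      | some j =>
        refine .step _ j ?_ ih
        simp [hmerge, h1]
  · intro h
    induction h with
    | base v h =>
      unfold hmerge at h
      split_ifs at h with h1
      · refine .step _ none h1 (.base _ ?_)
        rcases hb : b (p none) with _ | _ | j <;> simp_all
      · refine .base _ ?_
        rcases hb : b v with _ | _ | j <;> simp_all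
    | step v j h h2 ih =>
      unfold hmerge at h
      split_ifs at h with h1
      · refine .step _ none h1 (.step _ (some j) ?_ ih)
        rcases hb : b (p none) with _ | _ | j <;> simp_all
      · refine .step _ (some j) ?_ ih
        rcases hb : b v with _ | _ | j <;> simp_all

lemma hacyc_option {V κ : Type*} (b : V → Option (Option κ)) (p : Option κ → V) :
    HAcyc b p ↔ b (p none) ≠ some none ∧ HAcyc (hmerge b (p none)) (fun j => p (some j)) := by
  by_cases h0 : b (p none) = some none
  · simp only [h0, ne_eq, not_true_eq_false, false_and, iff_false]
    intro h
    exact hreach_not b p h0 _ (h none) h0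
  · simp only [h0, ne_eq, not_false_eq_true, true_and, HAcyc, ← hreach_merge b p h0]
    constructor
    · intro h i; exact h _
    · intro h i
      cases i with
      | some j => exact h j
      | none =>
        rcases hb : b (p none) with _ | _ | j
        · exact .base _ hb
        · exact absurd hb h0
        · exact .step _ _ hb (h j)

open Classical in
noncomputable def hcount {V ι : Type*} [Fintype V] [Fintype ι] (b : V → Option ι) : ℕ :=
  (Finset.univ.filter (fun p : ι → V => HAcyc b p)).card

lemma hcount_equiv {V ι κ : Type*} [Fintype V] [Fintype ι] [Fintype κ] (e : ι ≃ κ)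
    (b : V → Option κ) : hcount b = hcount (fun v => (b v).map e.symm) := by
  classical
  unfold hcount
  have key : ∀ (p : κ → V) v, HReach b p v → HReach (fun v => (b v).map e.symm) (p ∘ e) v := by
    intro p v h
    induction h with
    | base v h => exact .base _ (by simp [h])
    | step v i h1 h2 ih => exact .step _ (e.symm i) (by simp [h1]) (by simpa using ih)
  have key2 : ∀ (p : κ → V) v, HReach (fun v => (b v).map e.symm) (p ∘ e) v → HReach b p v := by
    intro p v h
    induction h with
    | base v h => exact .base _ (by simpa using h)
    | step v i h1 h2 ih =>
      refine .step _ (e i) ?_ (by simpa using ih)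
      simp at h1
      obtain ⟨a, h1, rfl⟩ := h1
      simpa using h1
  refine Finset.card_equiv (e.symm.arrowCongr (Equiv.refl V)) ?_
  intro p
  have : (e.symm.arrowCongr (Equiv.refl V)) p = p ∘ e := by ext; simp [Equiv.arrowCongr]
  rw [this]
  simp only [Finset.mem_filter, Finset.mem_univ, true_and]
  constructor
  · intro h i; exact key _ _ (h _)
  · intro h i
    have := key2 _ _ (h (e.symm i))
    simpa using this

open Classical in
lemma hcount_option {V κ : Type*} [Fintype V] [Fintype κ] (b : V → Option (Option κ)) :
    hcount b = ∑ v : V, if b v = some none then 0 else hcount (hmerge b v) := by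
  unfold hcount
  have : ∀ v, (if b v = some none then 0 else
      (Finset.univ.filter (fun p : κ → V => HAcyc (hmerge b v) p)).card) =
      (Finset.univ.filter (fun p : κ → V => b v ≠ some none ∧ HAcyc (hmerge b v) p)).card := by
    intro v; split_ifs with h <;> simp [h]
  simp only [this]
  simp only [Finset.card_filter]
  rw [← Fintype.sum_prod_type']
  refine Finset.sum_equiv (Equiv.piOptionEquivProd (β := fun _ => V)) (by simp) ?_
  intro p _
  simp only [hacyc_option b p]
  rfl

open Classical in
theorem hcount_eq {V : Type*} [Fintype V] (ι : Type) [Fintype ι] (b : V → Option ι) :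
    hcount b * Fintype.card V =
      (if Fintype.card ι = 0 then Fintype.card V else
        (Finset.univ.filter (fun v => b v = none)).card * (Fintype.card V) ^ Fintype.card ι) := by
  suffices H : ∀ (m : ℕ) (b : V → Option (Fin m)), hcount b * Fintype.card V =
      (Finset.univ.filter (fun v => b v = none)).card * (Fintype.card V) ^ m by
    rw [hcount_equiv (Fintype.equivFin ι).symm b, H]
    split_ifs with h
    · have : ∀ v, b v = none := by
        have := Fintype.card_eq_zero_iff.mp h
        intro v
        rcases b v with _ | i
        · rfl
        · exact this.elim i
      simp [this, h]
    · simp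
  intro m
  induction m with
  | zero =>
    intro b
    have hb : ∀ v, b v = none := by
      intro v
      rcases b v with _ | i
      · rfl
      · exact i.elim0
    simp [hb, hcount, HAcyc]
  | succ m ih =>
    intro b
    rw [hcount_equiv (finSuccEquiv m).symm b]
    set c : V → Option (Option (Fin m)) := fun v => (b v).map (finSuccEquiv m).symm.symm with hc
    have h1 : (Finset.univ.filter (fun v => b v = none)) =
      Finset.univ.filter (fun v => c v = none) := by
      ext v; simp [hc]
    rw [h1, hcount_option, Finset.sum_mul]
    set A := Finset.univ.filter (fun v => c v = none) with hA
    set S := Finset.univ.filter (fun v => c v = some none) with hS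
    have h2 : ∀ v, (if c v = some none then 0 else hcount (hmerge c v)) * Fintype.card V =
       ((if c v = some none then 0 else A.card) + (if c v = none then S.card else 0))
         * (Fintype.card V) ^ m := by
      intro v
      split_ifs with h h' h'
      · simp [h] at h'
      · simp
      · rw [ih]
        congr 1
        rw [← Finset.card_union_of_disjoint]
        · congr 1
          ext w
          simp only [hA, hS, Finset.mem_filter, Finset.mem_univ, true_and, Finset.mem_union]
          unfold hmerge
          rcases hw : c w with _ | _ | j <;> simp [h', hw]
        · rw [Finset.disjoint_left]
          intro w; simp only [hA, hS, Finset.mem_filter, Finset.mem_univ, true_and]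
          intro h; simp [h]
      · rw [ih]
        congr 1
        simp only [add_zero]
        congr 1
        ext w
        simp only [hA, Finset.mem_filter, Finset.mem_univ, true_and]
        unfold hmerge
        rcases hw : c w with _ | _ | j
        · simp [hw]
        · have : (c v).join ≠ none := by
            rcases hv : c v with _ | _ | j <;> simp_all
          simp [hw, this]
        · simp [hw]
    simp only [h2]
    rw [← Finset.sum_mul, Finset.sum_add_distrib, pow_succ', ← mul_assoc]
    congr 1
    have h3 : (∑ v : V, if c v = none then S.card else 0) = A.card * S.card := by
      rw [← Finset.sum_filter, Finset.sum_const, smul_eq_mul]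
    have h4 : (∑ v : V, if c v = some none then 0 else A.card) + S.card * A.card =
        Fintype.card V * A.card := by
      have : S.card * A.card = ∑ v : V, if c v = some none then A.card else 0 := by
        rw [← Finset.sum_filter, Finset.sum_const, smul_eq_mul]
      rw [this, ← Finset.sum_add_distrib]
      have : ∀ v, ((if c v = some none then 0 else A.card) + if c v = some none then A.card else 0)
        = A.card := by intro v; split_ifs <;> simp
      simp [this]
    rw [h3]; linarith


/-! ### Set partitions weighted by `(|B|-1)!` -/

def HPart {V : Type*} (s : Finset V) (P : Finset (Finset V)) : Prop :=
  (∀ B ∈ P, B.Nonempty) ∧ (∀ B ∈ P, B ⊆ s) ∧ (∀ v ∈ s, ∃ B ∈ P, v ∈ B) ∧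
  (∀ B ∈ P, ∀ C ∈ P, ∀ v, v ∈ B → v ∈ C → B = C)

open Classical in
noncomputable def hparts {V : Type*} (s : Finset V) : Finset (Finset (Finset V)) :=
  s.powerset.powerset.filter (HPart s)

lemma mem_hparts {V : Type*} (s : Finset V) (P : Finset (Finset V)) :
    P ∈ hparts s ↔ HPart s P := by
  simp only [hparts, Finset.mem_filter, Finset.mem_powerset, and_iff_right_iff_imp]
  intro h B hB
  exact Finset.mem_powerset.mpr (h.2.1 B hB)

open Polynomial in
noncomputable def hZ {V : Type*} (s : Finset V) : ℤ[X] :=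
  ∑ P ∈ hparts s, ∏ B ∈ P, (X * C (((B.card - 1).factorial : ℕ) : ℤ))

open Polynomial in
lemma hZ_empty {V : Type*} : hZ (∅ : Finset V) = 1 := by
  have : hparts (∅ : Finset V) = {∅} := by
    ext P
    rw [mem_hparts, Finset.mem_singleton]
    constructor
    · intro h
      rw [Finset.eq_empty_iff_forall_notMem]
      intro B hB
      have h1 := h.1 B hB
      have h2 := h.2.1 B hB
      simp_all
    · rintro rfl
      simp [HPart]
  simp [hZ, this]

open Polynomial in
lemma hZ_insert {V : Type*} [DecidableEq V] (s : Finset V) (a : V) (ha : a ∉ s) :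
    hZ (insert a s) = ∑ B ∈ s.powerset, X * C ((B.card.factorial : ℕ) : ℤ) * hZ (s \ B) := by
  simp only [hZ, Finset.mul_sum]
  rw [Finset.sum_sigma']
  symm
  have hnot : ∀ B ⊆ s, ∀ Q, HPart (s \ B) Q → insert a B ∉ Q := by
    intro B hB Q hQ h
    have := hQ.2.1 _ h (Finset.mem_insert_self a B)
    simp at this; exact ha this.1
  refine Finset.sum_bij (fun x _ => insert (insert a x.1) x.2) ?_ ?_ ?_ ?_
  · rintro ⟨B, Q⟩ h
    simp only [Finset.mem_sigma, Finset.mem_powerset, mem_hparts] at h ⊢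
    obtain ⟨hB, h1, h2, h3, h4⟩ := h
    have key : ∀ C ∈ Q, ∀ v, v ∈ insert a B → v ∉ C := by
      intro C hC v hv hvC
      have := h2 C hC hvC
      simp at this
      rcases Finset.mem_insert.mp hv with rfl | h
      · exact ha this.1
      · exact this.2 h
    refine ⟨?_, ?_, ?_, ?_⟩
    · intro C hC
      rcases Finset.mem_insert.mp hC with rfl | h
      · exact Finset.insert_nonempty _ _
      · exact h1 C h
    · intro C hC
      rcases Finset.mem_insert.mp hC with rfl | h
      · exact Finset.insert_subset_insert _ hB
      · exact (h2 C h).trans (Finset.sdiff_subset.trans (Finset.subset_insert _ _))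
    · intro v hv
      by_cases hvB : v ∈ insert a B
      · exact ⟨_, Finset.mem_insert_self _ _, hvB⟩
      · obtain ⟨C, hC, hvC⟩ := h3 v (by
          simp at hv hvB ⊢; tauto)
        exact ⟨C, Finset.mem_insert_of_mem hC, hvC⟩
    · intro C hC D hD v hvC hvD
      rcases Finset.mem_insert.mp hC with rfl | hC <;> rcases Finset.mem_insert.mp hD with rfl | hD
      · rfl
      · exact absurd hvD (key _ hD _ hvC)
      · exact absurd hvC (key _ hC _ hvD)
      · exact h4 C hC D hD v hvC hvD
  · rintro ⟨B, Q⟩ h ⟨B', Q'⟩ h' heq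
    simp only [Finset.mem_sigma, Finset.mem_powerset, mem_hparts] at h h' heq
    have hBB : insert a B = insert a B' := by
      have : insert a B ∈ insert (insert a B') Q' := heq ▸ Finset.mem_insert_self _ _
      rcases Finset.mem_insert.mp this with h1 | h1
      · exact h1
      · have := h'.2.2.1 _ h1 (Finset.mem_insert_self a B)
        simp at this; exact absurd this.1 ha
    have hB : B = B' := by
      have h1 : a ∉ B := fun h2 => ha (h.1 h2)
      have h1' : a ∉ B' := fun h2 => ha (h'.1 h2)
      rw [← Finset.erase_insert h1, hBB, Finset.erase_insert h1']
    subst hB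
    have : Q = Q' := by
      rw [← Finset.erase_insert (hnot B h.1 Q h.2), heq, Finset.erase_insert (hnot B h.1 Q' h'.2)]
    rw [this]
  · intro P hP
    rw [mem_hparts] at hP
    obtain ⟨h1, h2, h3, h4⟩ := hP
    obtain ⟨D, hD, haD⟩ := h3 a (Finset.mem_insert_self _ _)
    refine ⟨⟨D.erase a, P.erase D⟩, ?_, ?_⟩
    · simp only [Finset.mem_sigma, Finset.mem_powerset, mem_hparts]
      refine ⟨?_, ?_, ?_, ?_, ?_⟩
      · intro v hv
        have := h2 D hD (Finset.mem_of_mem_erase hv)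
        simp at this hv; tauto
      · intro B hB; exact h1 B (Finset.mem_of_mem_erase hB)
      · intro B hB v hv
        have hB' := Finset.mem_erase.mp hB
        have := h2 B hB'.2 hv
        have hvD : v ∉ D := fun h => hB'.1 (h4 _ hB'.2 _ hD v hv h)
        simp at this ⊢
        rcases this with rfl | h
        · exact absurd haD hvD
        · tauto
      · intro v hv
        simp at hv
        obtain ⟨B, hB, hvB⟩ := h3 v (by simp [hv.1])
        refine ⟨B, Finset.mem_erase.mpr ⟨?_, hB⟩, hvB⟩
        rintro rfl
        exact ha (hv.2 (fun h => by subst h; exact absurd hv.1 ha) hvB |>.elim)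
      · intro B hB C hC
        exact h4 B (Finset.mem_of_mem_erase hB) C (Finset.mem_of_mem_erase hC)
    · simp [Finset.insert_erase haD, Finset.insert_erase hD]
  · rintro ⟨B, Q⟩ h
    simp only [Finset.mem_sigma, Finset.mem_powerset, mem_hparts] at h
    rw [Finset.prod_insert (hnot B h.1 Q h.2)]
    rw [Finset.card_insert_of_notMem (fun h2 => ha (h.1 h2))]
    simp

open Polynomial in
lemma hstir (m : ℕ) : (∏ j ∈ Finset.range (m + 1), (X + C (j : ℤ))) =
    ∑ j ∈ Finset.range (m + 1), (m.choose j) • (X * C ((j.factorial : ℕ) : ℤ) *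
      ∏ j ∈ Finset.range (m - j), (X + C (j : ℤ))) := by
  induction m with
  | zero => simp
  | succ m ih =>
    rw [Finset.prod_range_succ, Finset.sum_range_succ', mul_add]
    conv_lhs => rw [add_comm]
    nth_rw 1 [ih]
    rw [Finset.sum_mul, Nat.sub_zero]
    rw [add_comm]
    conv_rhs => rw [add_comm]
    have : ∀ x ∈ Finset.range (m+1), (m + 1).choose (x + 1) • (X * C (((x + 1).factorial : ℕ) : ℤ) *
      ∏ j ∈ Finset.range (m + 1 - (x + 1)), (X + C (j : ℤ))) =
      m.choose x • (X * C ((x.factorial : ℕ) : ℤ) * ∏ j ∈ Finset.range (m - x), (X + C (j : ℤ)))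
        * C ((m + 1 : ℕ) : ℤ) := by
      intro x hx
      rw [Nat.add_sub_add_right]
      have h : ((m + 1).choose (x + 1) : ℤ[X]) * (x + 1) = (m + 1) * m.choose x := by
        exact_mod_cast (Nat.add_one_mul_choose_eq m x).symm
      rw [nsmul_eq_mul, nsmul_eq_mul, Nat.factorial_succ]
      push_cast
      simp only [map_mul, map_add, map_natCast, map_one]
      linear_combination (X * (x.factorial : ℤ[X]) *
        ∏ j ∈ Finset.range (m - x), (X + (j : ℤ[X]))) * h
    rw [Finset.sum_congr rfl this]
    simp
    ring

open Polynomial in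
lemma hZ_eq {V : Type*} [DecidableEq V] (m : ℕ) : ∀ s : Finset V, s.card = m →
    hZ s = ∏ j ∈ Finset.range m, (X + C (j : ℤ)) := by
  induction m using Nat.strong_induction_on with
  | _ m ih =>
    intro s hs
    rcases s.eq_empty_or_nonempty with rfl | ⟨a, ha⟩
    · simp at hs; subst hs; simp [hZ_empty]
    · obtain ⟨m, rfl⟩ : ∃ m', m = m' + 1 := ⟨m - 1, by
        have := Finset.card_pos.mpr ⟨a, ha⟩
        omega⟩
      have hc : (s.erase a).card = m := by rw [Finset.card_erase_of_mem ha, hs]; rfl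
      rw [← Finset.insert_erase ha, hZ_insert _ _ (Finset.notMem_erase a s), hstir]
      have : ∀ B ∈ (s.erase a).powerset, X * C ((B.card.factorial : ℕ) : ℤ) * hZ (s.erase a \ B) =
          (fun j => (X * C ((j.factorial : ℕ) : ℤ) *
            ∏ j ∈ Finset.range (m - j), (X + C (j : ℤ)))) B.card := by
        intro B hB
        rw [Finset.mem_powerset] at hB
        simp only
        rw [ih (m - B.card) (by omega) _ (by rw [Finset.card_sdiff_of_subset hB, hc])]
      rw [Finset.sum_congr rfl this]
      refine (Finset.sum_powerset_apply_card (fun j => (X * C ((j.factorial : ℕ) : ℤ) *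
            ∏ j ∈ Finset.range (m - j), (X + C (j : ℤ)))) (x := s.erase a)).trans ?_
      rw [hc]

open Polynomial in
lemma hS1_aux (m k : ℕ) : (∏ j ∈ Finset.range m, (X + C (j : ℤ))).coeff k =
    (-1) ^ (m + k) * (∏ j ∈ Finset.range m, (X - C (j : ℤ))).coeff k := by
  have h : (∏ j ∈ Finset.range m, (X + C (j : ℤ))) =
      C ((-1) ^ m) * (∏ j ∈ Finset.range m, (X - C (j : ℤ))).comp (C (-1) * X) := by
    rw [Polynomial.prod_comp]
    have : C ((-1 : ℤ) ^ m) = ∏ j ∈ Finset.range m, (C (-1) : ℤ[X]) := by simp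
    rw [this, ← Finset.prod_mul_distrib]
    refine Finset.prod_congr rfl fun j _ => ?_
    simp
    ring
  rw [h, coeff_C_mul, comp_C_mul_X_coeff, pow_add]
  ring

open Polynomial in
lemma hparts_sum {V : Type*} [DecidableEq V] (s : Finset V) (k : ℕ) :
    ∑ P ∈ (hparts s).filter (fun P => P.card = k), ∏ B ∈ P, (((B.card - 1).factorial : ℕ) : ℤ) =
    (-1) ^ (s.card + k) * (∏ j ∈ Finset.range s.card, (X - C (j : ℤ))).coeff k := by
  rw [← hS1_aux, ← hZ_eq s.card s rfl, hZ, finsetSum_coeff, Finset.sum_filter]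
  refine Finset.sum_congr rfl fun P _ => ?_
  rw [Finset.prod_mul_distrib, Finset.prod_const, ← map_prod, coeff_mul_C, coeff_X_pow]
  by_cases h : P.card = k
  · simp [h]
  · simp [h, Ne.symm h]

/-! ### Hypertrees and parent functions -/

def HCn {V : Type*} (E : Finset (Finset V)) : V → V → Prop :=
  Relation.ReflTransGen (fun a b => ∃ g ∈ E, a ∈ g ∧ b ∈ g)

lemma HCn.mono {V : Type*} {E F : Finset (Finset V)} (h : E ⊆ F) {x y : V} (hx : HCn E x y) :
    HCn F x y := by
  refine Relation.ReflTransGen.mono ?_ _ _ hx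
  rintro a b ⟨g, hg, h1⟩
  exact ⟨g, h hg, h1⟩

lemma HCn.symm {V : Type*} {E : Finset (Finset V)} {x y : V} (hx : HCn E x y) : HCn E y x := by
  induction hx with
  | refl => exact .refl
  | tail _ h ih =>
    obtain ⟨g, hg, h1, h2⟩ := h
    exact Relation.ReflTransGen.head ⟨g, hg, h2, h1⟩ ih

lemma HCn.trans {V : Type*} {E : Finset (Finset V)} {x y z : V} (hx : HCn E x y) (hy : HCn E y z) :
    HCn E x z := Relation.ReflTransGen.trans hx hy

lemma HCn.single {V : Type*} {E : Finset (Finset V)} {x y : V} (g : Finset V) (hg : g ∈ E)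
    (hx : x ∈ g) (hy : y ∈ g) : HCn E x y := Relation.ReflTransGen.single ⟨g, hg, hx, hy⟩

lemma hfc_iff {V : Type*} [DecidableEq V] (F : Hyperforest V) :
    HFConnected F ↔ ∀ u v, HCn F.edges u v := by
  constructor
  · intro h u v
    refine Relation.ReflTransGen.mono ?_ _ _ (h u v)
    rintro a b ⟨_, h⟩; exact h
  · intro h u v
    have := h u v
    induction this with
    | refl => exact .refl
    | @tail b c h1 h2 ih =>
      by_cases hbc : b = c
      · exact hbc ▸ ih
      · exact ih.tail ⟨hbc, h2⟩

lemma hfirst_hit {V : Type*} [DecidableEq V] {E : Finset (Finset V)} (e : Finset V) {r x : V}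
    (h : HCn E r x) : HCn (E.erase e) r x ∨ ∃ w ∈ e, HCn (E.erase e) r w := by
  induction h with
  | refl => exact .inl .refl
  | @tail b c h1 h2 ih =>
    rcases ih with ih | ih
    · obtain ⟨g, hg, hb, hc⟩ := h2
      by_cases hge : g = e
      · subst hge; exact .inr ⟨b, hb, ih⟩
      · exact .inl (ih.tail ⟨g, Finset.mem_erase.mpr ⟨hge, hg⟩, hb, hc⟩)
    · exact .inr ih

/-- Separation property. -/
def HSep {V : Type*} [DecidableEq V] (E : Finset (Finset V)) : Prop :=
  ∀ e ∈ E, ∀ a ∈ e, ∀ b ∈ e, HCn (E.erase e) a b → a = b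

lemma hsep_of_hf {V : Type*} [DecidableEq V] (F : Hyperforest V) : HSep F.edges := by
  intro e he a ha b hb hab
  by_contra hne
  have huniq : ∀ g ∈ F.edges, ∀ x y, x ≠ y → x ∈ g → y ∈ g → x ∈ e → y ∈ e → g = e := by
    intro g hg x y hxy h1 h2 h3 h4
    by_contra hge
    have := F.inter g hg e he hge
    rw [Finset.card_le_one] at this
    exact hxy (this x (by simp [*]) y (by simp [*]))
  let G : SimpleGraph V :=
    { Adj := fun x y => x ≠ y ∧ ∃ g ∈ F.edges.erase e, x ∈ g ∧ y ∈ g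
      symm := ⟨by rintro x y ⟨h, g, hg, h1, h2⟩; exact ⟨h.symm, g, hg, h2, h1⟩⟩
      loopless := ⟨by rintro x ⟨h, _⟩; exact h rfl⟩ }
  have hr : G.Reachable a b := by
    clear hne hb
    induction hab with
    | refl => exact SimpleGraph.Reachable.refl _
    | @tail b c h1 h2 ih =>
      by_cases hbc : b = c
      · exact hbc ▸ ih
      · exact ih.trans (SimpleGraph.Adj.reachable (show G.Adj b c from ⟨hbc, h2⟩))
  obtain ⟨p, hp⟩ := hr.exists_isPath
  have hadj : ∀ x y, G.Adj x y → ¬ (x ∈ e ∧ y ∈ e) := by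
    rintro x y ⟨hxy, g, hg, h1, h2⟩ ⟨h3, h4⟩
    rw [Finset.mem_erase] at hg
    exact hg.1 (huniq g hg.2 x y hxy h1 h2 h3 h4)
  have hl : 2 ≤ p.length := by
    rcases hlen : p.length with _ | _ | l
    · exact absurd (SimpleGraph.Walk.eq_of_length_eq_zero hlen) hne
    · exact absurd ⟨ha, hb⟩ (hadj _ _ (SimpleGraph.Walk.adj_of_length_eq_one hlen))
    · omega
  obtain ⟨l, hl⟩ : ∃ l, p.length = l + 2 := ⟨p.length - 2, by omega⟩
  have hinj : ∀ i ≤ l + 2, ∀ j ≤ l + 2, p.getVert i = p.getVert j → i = j := by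
    intro i hi j hj hij
    exact hp.getVert_injOn (by simp [hl, hi]) (by simp [hl, hj]) hij
  obtain ⟨g, hg, hgv⟩ := F.cycles l (fun j => p.getVert j.1) (by
      intro i j hij
      exact Fin.ext (hinj _ (by omega) _ (by omega) hij)) (by
      intro j
      by_cases hj : j.1 = l + 2
      · refine ⟨e, he, ?_, ?_⟩
        · simp only [hj, ← hl, SimpleGraph.Walk.getVert_length]; exact hb
        · have : j + 1 = 0 := by
            have : j = Fin.last _ := Fin.ext hj
            rw [this]; exact Fin.last_add_one _
          rw [this]
          simpa using ha
      · have hj1 : ((j + 1 : Fin (l + 3)) : ℕ) = j.1 + 1 := by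
          apply Fin.val_add_one_of_lt
          rw [Fin.lt_def]; simp only [Fin.val_last]; omega
        have := p.adj_getVert_succ (i := j.1) (by omega)
        obtain ⟨_, g, hg, h1, h2⟩ := this
        refine ⟨g, Finset.mem_of_mem_erase hg, h1, ?_⟩
        simp only [hj1]; exact h2)
  have h0 : a ∈ g := by simpa using hgv 0
  have h2 : b ∈ g := by
    have := hgv (Fin.last _)
    simp only [Fin.val_last, ← hl, SimpleGraph.Walk.getVert_length] at this
    exact this
  have hge := huniq g hg a b hne h0 h2 ha hb
  subst hge
  have h01 := p.adj_getVert_succ (i := 0) (by omega)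
  have h1 := hgv 1
  refine hadj _ _ h01 ⟨by simpa using ha, ?_⟩
  simpa using h1

lemma hcycles_of_sep {V : Type*} [DecidableEq V] (E : Finset (Finset V)) (hE : HSep E)
    (k : ℕ) (v : Fin (k + 3) → V) (hv : Function.Injective v)
    (h : ∀ j : Fin (k + 3), ∃ e ∈ E, v j ∈ e ∧ v (j + 1) ∈ e) :
    ∃ e ∈ E, ∀ j, v j ∈ e := by
  set u : ℕ → V := fun i => v (Fin.ofNat (k + 3) i) with hu
  have hstep : ∀ i, ∃ e ∈ E, u i ∈ e ∧ u (i + 1) ∈ e := by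
    intro i
    obtain ⟨e, he, h1, h2⟩ := h (Fin.ofNat (k + 3) i)
    refine ⟨e, he, h1, ?_⟩
    convert h2 using 2
    apply Fin.ext
    simp [Fin.val_add, Fin.ofNat]
  have hinj : ∀ i < k + 3, ∀ j < k + 3, u i = u j → i = j := by
    intro i hi j hj hij
    have := congrArg Fin.val (hv hij)
    simpa [Fin.ofNat, Nat.mod_eq_of_lt hi, Nat.mod_eq_of_lt hj] using this
  have hwrap : u (k + 3) = u 0 := by
    simp only [hu]; congr 1; apply Fin.ext; simp [Fin.ofNat]
  obtain ⟨e, he, h0, h1⟩ := hstep 0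
  have key : ∀ i, i + 1 ≤ k + 3 → (∀ j, 1 ≤ j → j ≤ i + 1 → u j ∈ e) ∨
      ∃ j, 1 ≤ j ∧ j < i + 1 ∧ u j ∈ e ∧ HCn (E.erase e) (u j) (u (i + 1)) := by
    intro i
    induction i with
    | zero =>
      intro _
      left
      intro j hj hj'
      obtain rfl : j = 1 := by omega
      exact h1
    | succ i ih =>
      intro hi
      obtain ⟨g, hg, hg1, hg2⟩ := hstep (i + 1)
      rcases ih (by omega) with ih | ⟨j, hj1, hj2, hj3, hj4⟩
      · by_cases hge : g = e
        · left
          intro j hj hj'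
          rcases Nat.lt_or_ge j (i + 2) with h | h
          · exact ih j hj (by omega)
          · obtain rfl : j = i + 1 + 1 := by omega
            exact hge ▸ hg2
        · right
          exact ⟨i + 1, by omega, by omega, ih _ (by omega) le_rfl,
            HCn.single g (Finset.mem_erase.mpr ⟨hge, hg⟩) hg1 hg2⟩
      · by_cases hge : g = e
        · subst hge
          have := hinj _ (by omega) _ (by omega) (hE g he _ hj3 _ hg1 hj4)
          omega
        · right
          exact ⟨j, hj1, by omega, hj3, hj4.trans
            (HCn.single g (Finset.mem_erase.mpr ⟨hge, hg⟩) hg1 hg2)⟩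
  refine ⟨e, he, ?_⟩
  rcases key (k + 2) le_rfl with hk | ⟨j, hj1, hj2, hj3, hj4⟩
  · intro j
    rcases Nat.eq_zero_or_pos j.1 with hj | hj
    · have : j = Fin.ofNat (k + 3) 0 := Fin.ext (by simp [hj, Fin.ofNat])
      rw [this]; exact h0
    · have : j = Fin.ofNat (k + 3) j.1 := Fin.ext (by simp [Fin.ofNat, Nat.mod_eq_of_lt j.2])
      rw [this]; exact hk j.1 hj (by omega)
  · have h5 : u (k + 2 + 1) = u 0 := hwrap
    rw [h5] at hj4
    have := hinj _ (by omega) _ (by omega) (hE e he _ hj3 _ h0 hj4)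
    omega

lemma hinter_of_sep {V : Type*} [DecidableEq V] (E : Finset (Finset V)) (hE : HSep E) :
    ∀ e ∈ E, ∀ f ∈ E, e ≠ f → (e ∩ f).card ≤ 1 := by
  intro e he f hf hne
  rw [Finset.card_le_one]
  intro a ha b hb
  rw [Finset.mem_inter] at ha hb
  exact hE e he a ha.1 b hb.1
    (HCn.single f (Finset.mem_erase.mpr ⟨hne.symm, hf⟩) ha.2 hb.2)

/-- the set of edge sets of hypertrees with `k` edges -/
def HTset (V : Type*) [DecidableEq V] (k : ℕ) : Set (Finset (Finset V)) :=
  {E | (∀ e ∈ E, 2 ≤ e.card) ∧ HSep E ∧ (∀ u v, HCn E u v) ∧ E.card = k}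

lemma hedges_bijOn (V : Type*) [DecidableEq V] (k : ℕ) :
    Set.BijOn (fun T : Hyperforest V => T.edges) {T | HFConnected T ∧ T.edges.card = k}
      (HTset V k) := by
  refine ⟨?_, ?_, ?_⟩
  · rintro T ⟨h1, h2⟩
    exact ⟨T.two_le, hsep_of_hf T, (hfc_iff T).mp h1, h2⟩
  · rintro ⟨E, _, _, _⟩ _ ⟨E', _, _, _⟩ _ h
    simp only at h
    subst h; rfl
  · rintro E ⟨h1, h2, h3, h4⟩
    let T : Hyperforest V := ⟨E, h1, hinter_of_sep E h2, hcycles_of_sep E h2⟩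
    exact ⟨T, ⟨(hfc_iff T).mpr h3, h4⟩, rfl⟩

section parent
variable {V : Type*} [DecidableEq V]

open Classical in
noncomputable def hblk (P : Finset (Finset V)) (v : V) : Option P :=
  if h : ∃ B : P, v ∈ B.1 then some h.choose else none

lemma hblk_some {s : Finset V} {P : Finset (Finset V)} (hP : HPart s P) (v : V) (B : P) :
    hblk P v = some B ↔ v ∈ B.1 := by
  unfold hblk
  split_ifs with h
  · rw [Option.some_inj]
    constructor
    · rintro rfl; exact h.choose_spec
    · intro hv
      exact Subtype.ext (hP.2.2.2 _ h.choose.2 _ B.2 v h.choose_spec hv)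
  · push Not at h
    simp [h B]

lemma hblk_none {s : Finset V} {P : Finset (Finset V)} (hP : HPart s P) (v : V) :
    hblk P v = none ↔ v ∉ s := by
  unfold hblk
  split_ifs with h
  · obtain ⟨B, hB⟩ := h
    simpa using hP.2.1 _ B.2 hB
  · simp only [true_iff]
    intro hv
    obtain ⟨B, hB, hvB⟩ := hP.2.2.1 v hv
    exact h ⟨⟨B, hB⟩, hvB⟩

/-- edges from a partition with parents -/
def hedge {P : Finset (Finset V)} (p : P → V) (i : P) : Finset V := insert (p i) i.1

def hPhi (x : Σ P : Finset (Finset V), (P → V)) : Finset (Finset V) :=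
  Finset.univ.image (hedge x.2)

def HStep {P : Finset (Finset V)} (p : P → V) (x y : V) : Prop :=
  ∃ i : P, x ∈ i.1 ∧ y = p i

lemma hreach_nocycle {s : Finset V} {P : Finset (Finset V)} (hP : HPart s P) (p : P → V) (v : V)
    (h : HReach (hblk P) p v) : ¬ Relation.TransGen (HStep p) v v := by
  induction h with
  | base v h =>
    intro hc
    obtain ⟨c, ⟨i, hi, _⟩, _⟩ := Relation.TransGen.head'_iff.mp hc
    rw [← hblk_some hP, h] at hi
    simp at hi
  | step v i h1 h2 ih =>
    intro hc
    obtain ⟨c, ⟨j, hj, rfl⟩, hc⟩ := Relation.TransGen.head'_iff.mp hc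
    rw [← hblk_some hP, h1] at hj
    simp at hj
    subst hj
    exact ih (Relation.TransGen.tail' hc ⟨i, (hblk_some hP v i).mp h1, rfl⟩)

variable {r : V} {s : Finset V} {P : Finset (Finset V)}

lemma hacyc_reach {ι : Type*} {b : V → Option ι} {p : ι → V} (h : HAcyc b p) (v : V) :
    HReach b p v := by
  rcases hb : b v with _ | i
  · exact .base _ hb
  · exact .step _ i hb (h i)

lemma hno (hP : HPart s P) {p : P → V} (hp : HAcyc (hblk P) p) (v : V) :
    ¬ Relation.TransGen (HStep p) v v := hreach_nocycle hP p v (hacyc_reach hp v)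

lemma hno' (hP : HPart s P) {p : P → V} (hp : HAcyc (hblk P) p) (i : P) (v : V) (hv : v ∈ i.1)
    (h : Relation.ReflTransGen (HStep p) (p i) v) : False :=
  hno hP hp (p i) (Relation.TransGen.tail' h ⟨i, hv, rfl⟩)

lemma hp_notMem (hP : HPart s P) {p : P → V} (hp : HAcyc (hblk P) p) (i : P) : p i ∉ i.1 :=
  fun h => hno' hP hp i _ h .refl

lemma hedge_inj (hP : HPart s P) {p : P → V} (hp : HAcyc (hblk P) p) :
    Function.Injective (hedge p) := by
  intro i j hij
  by_contra hne
  have hd : ∀ v, v ∈ i.1 → v ∈ j.1 → False := fun v h1 h2 =>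
    hne (Subtype.ext (hP.2.2.2 _ i.2 _ j.2 v h1 h2))
  obtain ⟨a, ha⟩ := hP.1 _ i.2
  obtain ⟨c, hc⟩ := hP.1 _ j.2
  have h1 : a = p j := by
    have : a ∈ hedge p j := hij ▸ Finset.mem_insert_of_mem ha
    rcases Finset.mem_insert.mp this with h | h
    · exact h
    · exact (hd a ha h).elim
  have h2 : c = p i := by
    have : c ∈ hedge p i := hij ▸ Finset.mem_insert_of_mem hc
    rcases Finset.mem_insert.mp this with h | h
    · exact h
    · exact (hd c h hc).elim
  subst h1
  subst h2
  exact hno' hP hp i _ ha (.single ⟨j, hc, rfl⟩)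

lemma hdesc (hP : HPart s P) {p : P → V} (i : P) (x y : V)
    (hx : x ∈ i.1) (h : HCn ((hPhi ⟨P, p⟩).erase (hedge p i)) x y) :
    Relation.ReflTransGen (HStep p) y x := by
  induction h with
  | refl => exact .refl
  | @tail y z h1 h2 ih =>
    obtain ⟨g, hg, hy, hz⟩ := h2
    rw [Finset.mem_erase] at hg
    obtain ⟨hgi, hg⟩ := hg
    simp only [hPhi, Finset.mem_image, Finset.mem_univ, true_and] at hg
    obtain ⟨j, rfl⟩ := hg
    have hpj : Relation.ReflTransGen (HStep p) (p j) x := by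
      rcases Finset.mem_insert.mp hy with rfl | hy
      · exact ih
      · rcases Relation.ReflTransGen.cases_head ih with h | ⟨c, ⟨j', hj', rfl⟩, hc⟩
        · subst h
          have : i = j := Subtype.ext (hP.2.2.2 _ i.2 _ j.2 y hx hy)
          subst this; exact absurd rfl hgi
        · have : j' = j := Subtype.ext (hP.2.2.2 _ j'.2 _ j.2 y hj' hy)
          subst this; exact hc
    rcases Finset.mem_insert.mp hz with rfl | hz
    · exact hpj
    · exact .head ⟨j, hz, rfl⟩ hpj

lemma hPhi_sep (hP : HPart s P) {p : P → V} (hp : HAcyc (hblk P) p) : HSep (hPhi ⟨P, p⟩) := by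
  intro e he a ha c hc hac
  simp only [hPhi, Finset.mem_image, Finset.mem_univ, true_and] at he
  obtain ⟨i, rfl⟩ := he
  by_contra hne
  have main : ∀ a c, a ∈ i.1 → c ∈ hedge p i → a ≠ c →
      HCn ((hPhi ⟨P, p⟩).erase (hedge p i)) a c → False := by
    intro a c ha hc hne hac
    have := hdesc hP i a c ha hac
    rcases Finset.mem_insert.mp hc with rfl | hc
    · exact hno' hP hp i a ha this
    · rcases Relation.ReflTransGen.cases_head this with h | ⟨d, ⟨j', hj', rfl⟩, hd⟩
      · exact hne h.symm
      · have : j' = i := Subtype.ext (hP.2.2.2 _ j'.2 _ i.2 c hj' hc)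
        subst this; exact hno' hP hp j' a ha hd
  rcases Finset.mem_insert.mp ha with rfl | ha'
  · rcases Finset.mem_insert.mp hc with rfl | hc'
    · exact hne rfl
    · exact main c _ hc' ha (Ne.symm hne) hac.symm
  · exact main a c ha' hc hne hac

lemma hPhi_conn [Fintype V] (hP : HPart (Finset.univ.erase r) P) {p : P → V}
    (hp : HAcyc (hblk P) p) (v : V) : HCn (hPhi ⟨P, p⟩) v r := by
  have := hacyc_reach hp v
  induction this with
  | base v h =>
    rw [hblk_none hP] at h
    simp at h; subst h; exact .refl
  | step v i h1 h2 ih =>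
    rw [hblk_some hP] at h1
    exact (HCn.single (hedge p i) (Finset.mem_image_of_mem _ (Finset.mem_univ _))
      (Finset.mem_insert_of_mem h1) (Finset.mem_insert_self _ _)).trans ih

lemma hPhi_notconn [Fintype V] (hP : HPart (Finset.univ.erase r) P) {p : P → V} (i : P) (x : V)
    (hx : x ∈ i.1) :
    ¬ HCn ((hPhi ⟨P, p⟩).erase (hedge p i)) r x := by
  intro h
  have := hdesc hP i x r hx h.symm
  have hr : ∀ j : P, r ∉ j.1 := fun j hj => by
    have := hP.2.1 _ j.2 hj
    simp at this
  rcases Relation.ReflTransGen.cases_head this with h | ⟨d, ⟨j', hj', rfl⟩, hd⟩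
  · subst h; exact hr i hx
  · exact hr _ hj'

lemma hPhi_connp [Fintype V] (hP : HPart (Finset.univ.erase r) P) {p : P → V}
    (hp : HAcyc (hblk P) p) (i : P) :
    HCn ((hPhi ⟨P, p⟩).erase (hedge p i)) r (p i) := by
  rcases hfirst_hit (hedge p i) (hPhi_conn hP hp (p i)).symm with h | ⟨w, hw, h⟩
  · exact h
  · rcases Finset.mem_insert.mp hw with rfl | hw
    · exact h
    · exact absurd h (hPhi_notconn hP i w hw)

/-- The source set of the bijection. -/
def HSrc (V : Type*) [DecidableEq V] [Fintype V] (r : V) (k : ℕ) :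
    Set (Σ P : Finset (Finset V), (P → V)) :=
  {x | HPart (Finset.univ.erase r) x.1 ∧ x.1.card = k ∧ HAcyc (hblk x.1) x.2}

lemma hPhi_mapsTo [Fintype V] (k : ℕ) : Set.MapsTo hPhi (HSrc V r k) (HTset V k) := by
  rintro ⟨P, p⟩ ⟨hP, hk, hp⟩
  simp only at hP hk hp
  refine ⟨?_, hPhi_sep hP hp, fun u v => (hPhi_conn hP hp u).trans (hPhi_conn hP hp v).symm, ?_⟩
  · intro e he
    simp only [hPhi, Finset.mem_image, Finset.mem_univ, true_and] at he
    obtain ⟨i, rfl⟩ := he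
    rw [hedge, Finset.card_insert_of_notMem (hp_notMem hP hp i)]
    have := Finset.card_pos.mpr (hP.1 _ i.2)
    omega
  · rw [hPhi, Finset.card_image_of_injective _ (hedge_inj hP hp)]
    simpa using hk

lemma hPhi_injOn [Fintype V] (k : ℕ) : Set.InjOn hPhi (HSrc V r k) := by
  have key : ∀ (P : Finset (Finset V)) (p : P → V) (P' : Finset (Finset V)) (p' : P' → V),
      HPart (Finset.univ.erase r) P → HAcyc (hblk P) p →
      HPart (Finset.univ.erase r) P' → HAcyc (hblk P') p' → hPhi ⟨P, p⟩ = hPhi ⟨P', p'⟩ →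
      ∀ i : P, ∃ i' : P', i.1 = i'.1 ∧ p i = p' i' := by
    intro P p P' p' hP hp hP' hp' heq i
    have : hedge p i ∈ hPhi ⟨P', p'⟩ := heq ▸ Finset.mem_image_of_mem _ (Finset.mem_univ _)
    simp only [hPhi, Finset.mem_image, Finset.mem_univ, true_and] at this
    obtain ⟨i', hi'⟩ := this
    have h1 := hPhi_connp hP hp i
    rw [heq, ← hi'] at h1
    have h2 : p i ∈ hedge p' i' := hi' ▸ Finset.mem_insert_self _ _
    have h3 : p i = p' i' := by
      rcases Finset.mem_insert.mp h2 with h | h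
      · exact h
      · exact absurd h1 (hPhi_notconn hP' i' _ h)
    refine ⟨i', ?_, h3⟩
    rw [← Finset.erase_insert (hp_notMem hP hp i), ← Finset.erase_insert (hp_notMem hP' hp' i')]
    unfold hedge at hi'
    rw [hi', h3]
  rintro ⟨P, p⟩ ⟨hP, hk, hp⟩ ⟨P', p'⟩ ⟨hP', hk', hp'⟩ heq
  simp only at hP hk hp hP' hk' hp'
  have h1 := key P p P' p' hP hp hP' hp' heq
  have h2 := key P' p' P p hP' hp' hP hp heq.symm
  have : P = P' := by
    ext B
    constructor
    · intro hB
      obtain ⟨i', hi, _⟩ := h1 ⟨B, hB⟩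
      simp only at hi
      rw [hi]; exact i'.2
    · intro hB
      obtain ⟨i', hi, _⟩ := h2 ⟨B, hB⟩
      simp only at hi
      rw [hi]; exact i'.2
  subst this
  have : p = p' := by
    ext i
    obtain ⟨i', hi, h⟩ := h1 i
    rw [h, Subtype.ext hi]
  rw [this]

lemma hPhi_surjOn [Fintype V] (k : ℕ) : Set.SurjOn hPhi (HSrc V r k) (HTset V k) := by
  rintro E ⟨h2, hsep, hconn, hk⟩
  have hex : ∀ e : Finset V, ∃ c, e ∈ E → c ∈ e ∧ HCn (E.erase e) r c := by
    intro e
    by_cases he : e ∈ E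
    · obtain ⟨x, hx⟩ : e.Nonempty := Finset.card_pos.mp (by have := h2 e he; omega)
      rcases hfirst_hit e (hconn r x) with h | ⟨w, hw, h⟩
      · exact ⟨x, fun _ => ⟨hx, h⟩⟩
      · exact ⟨w, fun _ => ⟨hw, h⟩⟩
    · exact ⟨r, fun h => absurd h he⟩
  choose c hc using hex
  have huniq : ∀ e ∈ E, ∀ w ∈ e, HCn (E.erase e) r w → w = c e := by
    intro e he w hw h
    exact hsep e he w hw _ (hc e he).1 (h.symm.trans (hc e he).2)
  -- every non-root vertex lies in some block
  have hcover : ∀ v, v ≠ r → ∃ e ∈ E, v ∈ e ∧ c e ≠ v := by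
    intro v hv
    have hne : ∀ x, HCn (E.filter (fun e => v ∉ e)) r x → x ≠ v := by
      intro x hx
      rcases Relation.ReflTransGen.cases_tail hx with h | ⟨y, _, g, hg, _, h⟩
      · subst h; exact Ne.symm hv
      · rintro rfl
        exact (Finset.mem_filter.mp hg).2 h
    have hpath : ∀ y, HCn E r y → HCn (E.filter (fun e => v ∉ e)) r y ∨
        ∃ x, ∃ e ∈ E, HCn (E.filter (fun e => v ∉ e)) r x ∧ v ∈ e ∧ x ∈ e := by
      intro y hy
      induction hy with
      | refl => exact .inl .refl
      | @tail y z h1 h2 ih =>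
        rcases ih with ih | ih
        · obtain ⟨g, hg, hy, hz⟩ := h2
          by_cases hvg : v ∈ g
          · exact .inr ⟨y, g, hg, ih, hvg, hy⟩
          · exact .inl (ih.tail ⟨g, Finset.mem_filter.mpr ⟨hg, hvg⟩, hy, hz⟩)
        · exact .inr ih
    rcases hpath v (hconn r v) with h | ⟨x, e, he, hx, hve, hxe⟩
    · exact absurd rfl (hne v h)
    · refine ⟨e, he, hve, ?_⟩
      rw [← huniq e he x hxe (hx.mono ?_)]
      · exact hne x hx
      · intro g hg
        rw [Finset.mem_filter] at hg
        refine Finset.mem_erase.mpr ⟨?_, hg.1⟩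
        rintro rfl; exact hg.2 hve
  -- and in only one
  have honly : ∀ e ∈ E, ∀ f ∈ E, ∀ v, v ∈ e → v ∈ f → c e ≠ v → c f ≠ v → e = f := by
    intro e he f hf v hve hvf hce hcf
    by_contra hef
    have hsub : (E.erase e).erase f ⊆ E.erase f := by
      intro g hg
      simp only [Finset.mem_erase] at hg ⊢
      exact ⟨hg.1, hg.2.2⟩
    rcases hfirst_hit f (hc e he).2 with h | ⟨w, hw, h⟩
    · refine hcf (huniq f hf v hvf ((h.mono hsub).trans ?_)).symm
      exact HCn.single e (Finset.mem_erase.mpr ⟨hef, he⟩) (hc e he).1 hve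
    · refine hce (huniq e he v hve ((h.mono (Finset.erase_subset _ _)).trans ?_)).symm
      exact HCn.single f (Finset.mem_erase.mpr ⟨Ne.symm hef, hf⟩) hw hvf
  have hroot : ∀ e ∈ E, r ∈ e → c e = r := fun e he hr => (huniq e he r hr .refl).symm
  set B : Finset V → Finset V := fun e => e.erase (c e) with hB
  have hBne : ∀ e ∈ E, (B e).Nonempty := by
    intro e he
    apply Finset.card_pos.mp
    have := h2 e he
    rw [hB]
    simp only
    rw [Finset.card_erase_of_mem (hc e he).1]
    omega
  have hmemB : ∀ e v, v ∈ B e ↔ v ∈ e ∧ c e ≠ v := by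
    intro e v; simp only [hB, Finset.mem_erase]; tauto
  have hBinj : ∀ e ∈ E, ∀ f ∈ E, ∀ v, v ∈ B e → v ∈ B f → e = f := by
    intro e he f hf v h1 h2
    rw [hmemB] at h1 h2
    exact honly e he f hf v h1.1 h2.1 h1.2 h2.2
  set P : Finset (Finset V) := E.image B with hPdef
  have hP : HPart (Finset.univ.erase r) P := by
    refine ⟨?_, ?_, ?_, ?_⟩
    · intro b hb
      obtain ⟨e, he, rfl⟩ := Finset.mem_image.mp hb
      exact hBne e he
    · intro b hb v hv
      obtain ⟨e, he, rfl⟩ := Finset.mem_image.mp hb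
      rw [hmemB] at hv
      simp only [Finset.mem_erase, Finset.mem_univ, and_true]
      rintro rfl
      exact hv.2 (hroot e he hv.1)
    · intro v hv
      obtain ⟨e, he, h⟩ := hcover v (by simpa using hv)
      exact ⟨B e, Finset.mem_image_of_mem _ he, (hmemB e v).mpr h⟩
    · intro b hb b' hb' v hv hv'
      obtain ⟨e, he, rfl⟩ := Finset.mem_image.mp hb
      obtain ⟨f, hf, rfl⟩ := Finset.mem_image.mp hb'
      rw [hBinj e he f hf v hv hv']
  have hch : ∀ i : P, ∃ e, e ∈ E ∧ B e = i.1 := by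
    intro i
    obtain ⟨e, he, h⟩ := Finset.mem_image.mp i.2
    exact ⟨e, he, h⟩
  choose q hq using hch
  have hqB : ∀ e (he : e ∈ E), q ⟨B e, Finset.mem_image_of_mem _ he⟩ = e := by
    intro e he
    obtain ⟨v, hv⟩ := hBne e he
    have := hq ⟨B e, Finset.mem_image_of_mem _ he⟩
    exact hBinj _ this.1 e he v (this.2 ▸ hv) hv
  have hedgeq : ∀ i, hedge (fun i => c (q i)) i = q i := by
    intro i
    simp only [hedge]
    rw [← (hq i).2, hB]
    exact Finset.insert_erase (hc _ (hq i).1).1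
  have hPhiE : hPhi ⟨P, fun i => c (q i)⟩ = E := by
    ext e
    simp only [hPhi, Finset.mem_image, Finset.mem_univ, true_and, hedgeq]
    constructor
    · rintro ⟨i, rfl⟩; exact (hq i).1
    · intro he; exact ⟨_, hqB e he⟩
  refine ⟨⟨P, fun i => c (q i)⟩, ⟨hP, ?_, ?_⟩, hPhiE⟩
  · simp only [hPdef]
    rw [Finset.card_image_of_injOn, hk]
    intro e he f hf hef
    obtain ⟨v, hv⟩ := hBne e he
    exact hBinj e he f hf v hv ((show B e = B f from hef) ▸ hv)
  · have hreach : ∀ v, HReach (hblk P) (fun i => c (q i)) v := by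
      intro v
      have := hconn r v
      induction this with
      | refl =>
        refine .base _ ?_
        rw [hblk_none hP]; simp
      | @tail x y _ hxy ih =>
        obtain ⟨g, hg, hx, hy⟩ := hxy
        have hblkg : ∀ z, z ∈ g → c g ≠ z →
            hblk P z = some ⟨B g, Finset.mem_image_of_mem _ hg⟩ := by
          intro z hz hcz
          rw [hblk_some hP, hmemB]; exact ⟨hz, hcz⟩
        have hcg : HReach (hblk P) (fun i => c (q i)) (c g) := by
          by_cases hxc : c g = x
          · rw [hxc]; exact ih
          · have := hblkg x hx hxc
            cases ih with
            | base _ h => rw [h] at this; simp at this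
            | step _ i h h' =>
              rw [h] at this
              simp only [Option.some_inj] at this
              subst this
              simp only [hqB g hg] at h'
              exact h'
        by_cases hyc : c g = y
        · rw [← hyc]; exact hcg
        · refine .step _ _ (hblkg y hy hyc) ?_
          simp only [hqB g hg]
          exact hcg
    exact fun i => hreach _

end parent

/-- The weighted count of hypertrees with `k` hyperedges on `n` labelled vertices:
`∑_{T ∈ HT_k(n)} ∏_{e ∈ E(T)} (|e|-2)! = (-1)^{n+k+1} n^{k-1} S_1(n-1,k)`. -/
theorem stmt15 (n k : ℕ) (hn : 2 ≤ n) (hk1 : 1 ≤ k) (hk2 : k ≤ n - 1) :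
    ∑ᶠ T ∈ {T : Hyperforest (Fin n) | HFConnected T ∧ T.edges.card = k},
        ∏ e ∈ T.edges, (((e.card - 2).factorial : ℕ) : ℤ) =
      (-1 : ℤ) ^ (n + k + 1) * (n : ℤ) ^ (k - 1) * S1 (n - 1) k := by
  classical
  let r : Fin n := ⟨0, by omega⟩
  let W : Finset (Finset (Fin n)) → ℤ := fun E => ∏ e ∈ E, (((e.card - 2).factorial : ℕ) : ℤ)
  rw [finsum_mem_eq_of_bijOn (g := W) _ (hedges_bijOn (Fin n) k) (fun _ _ => rfl)]
  have hbij : Set.BijOn hPhi (HSrc (Fin n) r k) (HTset (Fin n) k) :=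
    ⟨hPhi_mapsTo k, hPhi_injOn k, hPhi_surjOn k⟩
  rw [← finsum_mem_eq_of_bijOn
    (f := fun x => ∏ B ∈ x.1, (((B.card - 1).factorial : ℕ) : ℤ)) _ hbij ?_]
  swap
  · rintro ⟨P, p⟩ ⟨hP, hk, hp⟩
    simp only at hP hk hp
    simp only [W, hPhi]
    rw [Finset.prod_image (fun i _ j _ h => hedge_inj hP hp h)]
    have : ∀ i : P, (hedge p i).card - 2 = i.1.card - 1 := by
      intro i
      rw [hedge, Finset.card_insert_of_notMem (hp_notMem hP hp i)]
      omega
    simp only [this]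
    exact (Finset.prod_coe_sort P (fun B => (((B.card - 1).factorial : ℕ) : ℤ))).symm
  have hset : HSrc (Fin n) r k = ↑(((hparts (Finset.univ.erase r)).filter
      (fun P => P.card = k)).sigma (fun P => Finset.univ.filter
        (fun p : P → Fin n => HAcyc (hblk P) p))) := by
    ext ⟨P, p⟩
    simp [HSrc, mem_hparts, and_assoc]
  rw [hset, finsum_mem_coe_finset, Finset.sum_sigma]
  have hcnt : ∀ P ∈ (hparts (Finset.univ.erase r)).filter (fun P => P.card = k),
      ∑ p ∈ Finset.univ.filter (fun p : P → Fin n => HAcyc (hblk P) p),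
        ∏ B ∈ P, (((B.card - 1).factorial : ℕ) : ℤ) =
      (n : ℤ) ^ (k - 1) * ∏ B ∈ P, (((B.card - 1).factorial : ℕ) : ℤ) := by
    intro P hP
    rw [Finset.mem_filter, mem_hparts] at hP
    rw [Finset.sum_const, nsmul_eq_mul]
    congr 1
    have h := hcount_eq (V := Fin n) P (hblk P)
    have h1 : (Finset.univ.filter (fun v => hblk P v = none)) = {r} := by
      ext v
      simp [hblk_none hP.1]
    rw [h1, Fintype.card_coe, hP.2, if_neg (by omega), Fintype.card_fin, Finset.card_singleton,
      one_mul] at h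
    have h2 : hcount (hblk P) = n ^ (k - 1) := by
      apply Nat.eq_of_mul_eq_mul_right (show 0 < n by omega)
      rw [h, ← pow_succ]
      congr 1; omega
    have h3 : (Finset.univ.filter (fun p : P → Fin n => HAcyc (hblk P) p)).card = n ^ (k - 1) := by
      rw [← h2]
      unfold hcount
      congr!
    rw [h3]; push_cast; rfl
  simp only
  rw [Finset.sum_congr rfl hcnt, ← Finset.mul_sum, hparts_sum]
  have hcard : (Finset.univ.erase r).card = n - 1 := by simp
  rw [hcard, S1]
  have : (-1 : ℤ) ^ (n + k + 1) = (-1) ^ (n - 1 + k) := by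
    obtain ⟨m, rfl⟩ : ∃ m, n = m + 1 := ⟨n - 1, by omega⟩
    have : m + 1 + k + 1 = (m + 1 - 1 + k) + 2 := by omega
    rw [this, pow_add]; simp
  rw [this]
  ring
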